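/- arXiv:1711.03950 — 5 statements merged into one kernel-verified Lean document; each statement's English description precedes it below -/
import Mathlib

section
/- Let Θ ⊂ ℝ be a finite set with Θ = −Θ and 0 ∈ Θ, and suppose the Diophantine condition holds: there exist c > 0 and P₀ > 0 such that for every natural number m ≥ 1 and every θ ∈ Θ_m \ {0} one has |θ| ≥ c·m^{-P₀}, where Θ_m is the m-fold sumset of Θ. Let N ≥ 1 be a natural number and P > 24·N·P₀. Then there exists ε₁ ∈ (0,1) such that for every ε ∈ (0, ε₁), setting L̃ := ⌈ε^{-2N/P}⌉, the 'wide' resonance zones R'(θ) := (−θ − (5/2)ε^{1/2}/|θ|, −θ + (5/2)ε^{1/2}/|θ|), θ ∈ Θ_{3N·L̃} \ {0}, are pairwise disjoint: for distinct θ₁, θ₂ ∈ Θ_{3N·L̃} \ {0}, R'(θ₁) ∩ R'(θ₂) = ∅. -/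
open Pointwise

/-- The `m`-fold sumset `Θ_m = Θ + Θ + ⋯ + Θ` (m copies), with `Θ_0 = {0}`. -/
noncomputable def sumset (Θ : Finset ℝ) : ℕ → Finset ℝ
  | 0 => {0}
  | (L + 1) => Θ + sumset Θ L

theorem sumset_zero_mem (Θ : Finset ℝ) (h0 : (0:ℝ) ∈ Θ) (n : ℕ) : (0:ℝ) ∈ sumset Θ n := by
  induction n with
  | zero => simp [sumset]
  | succ k ih =>
    rw [sumset]
    exact Finset.mem_add.2 ⟨0, h0, 0, ih, by simp⟩

theorem sumset_neg_mem (Θ : Finset ℝ) (hsym : ∀ x ∈ Θ, -x ∈ Θ) (n : ℕ) :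
    ∀ a ∈ sumset Θ n, -a ∈ sumset Θ n := by
  induction n with
  | zero => simp [sumset]
  | succ k ih =>
    intro a ha
    rw [sumset] at ha ⊢
    obtain ⟨x, hx, y, hy, rfl⟩ := Finset.mem_add.1 ha
    exact Finset.mem_add.2 ⟨-x, hsym x hx, -y, ih y hy, by ring⟩

theorem sumset_add_mem (Θ : Finset ℝ) (n : ℕ) (b : ℝ) (m : ℕ) (hb : b ∈ sumset Θ m) :
    ∀ a ∈ sumset Θ n, a + b ∈ sumset Θ (m + n) := by
  induction n with
  | zero => simpa [sumset] using hb
  | succ k ih =>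
    intro a ha
    rw [sumset] at ha
    rw [← add_assoc, sumset]
    obtain ⟨x, hx, y, hy, rfl⟩ := Finset.mem_add.1 ha
    exact Finset.mem_add.2 ⟨x, hx, y + b, ih y hy, by ring⟩

/-- Under the Diophantine condition `|θ| ≥ c·m^{-P₀}` for `θ ∈ Θ_m \ {0}` and `P > 24NP₀`,
for all sufficiently small `ε` the wide resonance zones
`R'(θ) = (−θ − (5/2)√ε/|θ|, −θ + (5/2)√ε/|θ|)`, `θ ∈ Θ_{3N L̃} \ {0}` with
`L̃ = ⌈ε^{-2N/P}⌉`, are pairwise disjoint. -/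
theorem stmt_8 (Θ : Finset ℝ) (hsym : ∀ x ∈ Θ, -x ∈ Θ) (h0 : (0:ℝ) ∈ Θ)
    (c P₀ : ℝ) (hc : 0 < c) (hP₀ : 0 < P₀)
    (hdioph : ∀ m : ℕ, 1 ≤ m → ∀ θ ∈ sumset Θ m, θ ≠ 0 → c * (m : ℝ) ^ (-P₀) ≤ |θ|)
    (N : ℕ) (hN : 1 ≤ N) (P : ℝ) (hP : 24 * (N : ℝ) * P₀ < P) :
    ∃ ε₁ : ℝ, ε₁ ∈ Set.Ioo (0:ℝ) 1 ∧ ∀ ε : ℝ, ε ∈ Set.Ioo 0 ε₁ →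
      ∀ θ₁ ∈ sumset Θ (3 * N * ⌈ε ^ (-(2 * (N : ℝ)) / P)⌉₊), θ₁ ≠ 0 →
      ∀ θ₂ ∈ sumset Θ (3 * N * ⌈ε ^ (-(2 * (N : ℝ)) / P)⌉₊), θ₂ ≠ 0 →
      θ₁ ≠ θ₂ →
        Set.Ioo (-θ₁ - (5 / 2) * Real.sqrt ε / |θ₁|) (-θ₁ + (5 / 2) * Real.sqrt ε / |θ₁|) ∩
          Set.Ioo (-θ₂ - (5 / 2) * Real.sqrt ε / |θ₂|) (-θ₂ + (5 / 2) * Real.sqrt ε / |θ₂|)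
          = ∅ := by
  have hN' : (1:ℝ) ≤ N := by exact_mod_cast hN
  have hPpos : 0 < P := lt_of_le_of_lt (by positivity) hP
  set k : ℝ := c * (12 * (N:ℝ)) ^ (-P₀) with hk
  have hkpos : 0 < k := by positivity
  refine ⟨min (1 / 2) ((k ^ 2 / 5) ^ 12), ⟨by positivity, ?_⟩, ?_⟩
  · exact lt_of_le_of_lt (min_le_left _ _) (by norm_num)
  rintro ε ⟨hε, hε1⟩ θ₁ h₁ h₁0 θ₂ h₂ h₂0 hne
  have hεlt : ε < 1 := lt_of_lt_of_le hε1 ((min_le_left _ _).trans (by norm_num))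
  have hεk : ε ≤ (k ^ 2 / 5) ^ 12 := hε1.le.trans (min_le_right _ _)
  set t : ℝ := ε ^ ((1:ℝ) / 12) with ht
  have htpos : 0 < t := by positivity
  have ht12 : t ^ 12 = ε := by
    rw [ht, ← Real.rpow_natCast, ← Real.rpow_mul hε.le]; norm_num
  have ht1 : t ≤ 1 := Real.rpow_le_one hε.le hεlt.le (by norm_num)
  have htk : t ≤ k ^ 2 / 5 := by
    rw [← ht12] at hεk
    exact le_of_pow_le_pow_left₀ (by norm_num) (by positivity) hεk
  have hsq : Real.sqrt ε = t ^ 6 := by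
    rw [← ht12, show t ^ 12 = (t ^ 6) ^ 2 by ring, Real.sqrt_sq (by positivity)]
  set q : ℝ := ε ^ (-(2 * (N : ℝ)) / P) with hq
  have hq1 : 1 ≤ q := by
    apply Real.one_le_rpow_of_pos_of_le_one_of_nonpos hε hεlt.le
    rw [neg_div]
    have : 0 ≤ 2 * (N:ℝ) / P := by positivity
    linarith
  have hL1 : 1 ≤ ⌈q⌉₊ := Nat.one_le_ceil_iff.2 (by linarith)
  have hL2 : (⌈q⌉₊ : ℝ) ≤ 2 * q := by
    have := (Nat.ceil_lt_add_one (show 0 ≤ q by linarith)).le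
    linarith
  set M : ℕ := 3 * N * ⌈q⌉₊ with hM
  have hM1 : 1 ≤ M := by
    rw [hM]
    exact Nat.one_le_iff_ne_zero.2 (by positivity)
  have hMq : ((M + M : ℕ) : ℝ) ≤ 12 * N * q := by
    rw [hM]; push_cast
    nlinarith
  have hMpos : (0:ℝ) < ((M + M : ℕ) : ℝ) := by
    have : 0 < M + M := by omega
    exact_mod_cast this
  have hlow : k * t ≤ c * ((M + M : ℕ) : ℝ) ^ (-P₀) := by
    rw [hk, mul_assoc]
    apply mul_le_mul_of_nonneg_left _ hc.le
    refine le_trans ?_ (Real.rpow_le_rpow_of_nonpos hMpos hMq (by linarith))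
    rw [Real.mul_rpow (x := 12 * (N:ℝ)) (y := q) (by positivity) (by linarith)]
    apply mul_le_mul_of_nonneg_left _ (by positivity)
    rw [ht, hq, ← Real.rpow_mul hε.le]
    apply Real.rpow_le_rpow_of_exponent_ge hε hεlt.le
    rw [show -(2 * (N:ℝ)) / P * -P₀ = 2 * N * P₀ / P by ring, div_le_div_iff₀ hPpos (by norm_num)]
    linarith
  have hbd : ∀ θ ∈ sumset Θ (M + M), θ ≠ 0 → k * t ≤ |θ| := fun θ h h' =>
    hlow.trans (hdioph (M + M) (by omega) θ h h')
  have hz := sumset_zero_mem Θ h0 M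
  have b1 : k * t ≤ |θ₁| := hbd _ (by simpa using sumset_add_mem Θ M 0 M hz θ₁ h₁) h₁0
  have b2 : k * t ≤ |θ₂| := hbd _ (by simpa using sumset_add_mem Θ M 0 M hz θ₂ h₂) h₂0
  have b3 : k * t ≤ |θ₁ - θ₂| := hbd _ (by
    simpa [sub_eq_add_neg] using
      sumset_add_mem Θ M (-θ₂) M (sumset_neg_mem Θ hsym M θ₂ h₂) θ₁ h₁) (sub_ne_zero.2 hne)
  have hkt : 0 < k * t := by positivity
  have hfin : 5 * t ^ 6 ≤ (k * t) * (k * t) := by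
    have h4 : t ^ 4 ≤ t := pow_le_of_le_one htpos.le ht1 (by norm_num)
    have h5 : 5 * t ^ 4 ≤ k ^ 2 := by linarith
    calc 5 * t ^ 6 = (5 * t ^ 4) * t ^ 2 := by ring
      _ ≤ k ^ 2 * t ^ 2 := by gcongr
      _ = _ := by ring
  have hw : ∀ θ : ℝ, k * t ≤ |θ| → (5 / 2) * Real.sqrt ε / |θ| ≤ (k * t) / 2 := by
    intro θ hθ
    rw [div_le_iff₀ (by linarith), hsq]
    nlinarith
  have w1 := hw θ₁ b1
  have w2 := hw θ₂ b2
  rw [Set.eq_empty_iff_forall_notMem]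
  rintro x ⟨⟨x1, x2⟩, x3, x4⟩
  have : |θ₁ - θ₂| < k * t := by
    rw [abs_lt]; constructor <;> linarith
  linarith
end

section
/- Let l ∈ ℕ and let Θ ⊂ ℝ be a finite set with Θ = −Θ, 0 ∈ Θ, and card Θ = 2l + 1, satisfying the Diophantine condition: there exist c > 0 and P₀ > 0 such that for every natural number m ≥ 1 and every θ ∈ Θ_m \ {0} one has |θ| ≥ c·m^{-P₀}, where Θ_m is the m-fold sumset of Θ. Let N ≥ 1 be a natural number and let P satisfy P > 24·N·P₀ and P > 36·N·l. Then there exists ε₁ ∈ (0,1) such that for every ε ∈ (0, ε₁), setting L̃ := ⌈ε^{-2N/P}⌉, the Lebesgue measure of the resonant set BR := ⋃_{θ ∈ Θ_{3N·L̃} \ {0}} (−θ − ε^{1/2}/(4|θ|), −θ + ε^{1/2}/(4|θ|)) satisfies meas(BR) < ε^{1/6}. -/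
open Pointwise MeasureTheory

theorem sumset_subset_image (Θ : Finset ℝ) (m : ℕ) :
    ∀ x ∈ sumset Θ m, ∃ n : (Θ.erase 0 : Finset ℝ) → ℕ, (∀ j, n j ≤ m) ∧
      ∑ j, (n j : ℝ) * (j : ℝ) = x := by
  induction m with
  | zero =>
    intro x hx
    simp only [sumset, Finset.mem_singleton] at hx
    exact ⟨fun _ => 0, fun _ => le_rfl, by simp [hx]⟩
  | succ m ih =>
    intro x hx
    simp only [sumset] at hx
    obtain ⟨a, ha, b, hb, rfl⟩ := Finset.mem_add.1 hx
    obtain ⟨n, hn, hs⟩ := ih b hb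
    by_cases h : a = 0
    · exact ⟨n, fun j => (hn j).trans (Nat.le_succ m), by rw [hs, h, zero_add]⟩
    · let a' : (Θ.erase 0 : Finset ℝ) := ⟨a, Finset.mem_erase.2 ⟨h, ha⟩⟩
      refine ⟨fun j => n j + if j = a' then 1 else 0, fun j => ?_, ?_⟩
      · have := hn j
        dsimp only
        split_ifs <;> omega
      · push_cast
        simp only [add_mul, Finset.sum_add_distrib, hs, ite_mul, one_mul, zero_mul,
          Finset.sum_ite_eq', Finset.mem_univ, if_true]
        simp only [a']
        ring

theorem sumset_card_le (Θ : Finset ℝ) (l : ℕ) (h0 : (0:ℝ) ∈ Θ) (hcard : Θ.card = 2 * l + 1)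
    (m : ℕ) : (sumset Θ m).card ≤ (m + 1) ^ (2 * l) := by
  classical
  have hsub : sumset Θ m ⊆ (Fintype.piFinset
      (fun _ : (Θ.erase 0 : Finset ℝ) => Finset.range (m + 1))).image
      (fun n => ∑ j : (Θ.erase 0 : Finset ℝ), (n j : ℝ) * (j : ℝ)) := by
    intro x hx
    obtain ⟨n, hn, hs⟩ := sumset_subset_image Θ m x hx
    refine Finset.mem_image.2 ⟨n, ?_, hs⟩
    simp only [Fintype.mem_piFinset, Finset.mem_range]
    exact fun j => Nat.lt_succ_of_le (hn j)
  refine (Finset.card_le_card hsub).trans (Finset.card_image_le.trans ?_)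
  rw [Fintype.card_piFinset]
  simp [Finset.card_erase_of_mem h0, hcard]

theorem measure_bound (l : ℕ) (Θ : Finset ℝ) (h0 : (0:ℝ) ∈ Θ)
    (hcard : Θ.card = 2 * l + 1) (c P₀ : ℝ) (hc : 0 < c)
    (hdioph : ∀ m : ℕ, 1 ≤ m → ∀ θ ∈ sumset Θ m, θ ≠ 0 → c * (m : ℝ) ^ (-P₀) ≤ |θ|)
    (m : ℕ) (hm : 1 ≤ m) (ε : ℝ) :
    volume (⋃ θ ∈ ((sumset Θ m : Set ℝ) \ {0}),
          Set.Ioo (-θ - Real.sqrt ε / (4 * |θ|)) (-θ + Real.sqrt ε / (4 * |θ|))) ≤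
      ENNReal.ofReal (((m : ℝ) + 1) ^ (2 * l) * (Real.sqrt ε * (m : ℝ) ^ P₀ / (2 * c))) := by
  classical
  have hm0 : (0:ℝ) < m := by exact_mod_cast hm
  have hset : ((sumset Θ m : Set ℝ) \ {0}) = (((sumset Θ m).erase 0 : Finset ℝ) : Set ℝ) := by
    simp
  rw [hset]
  simp only [Finset.mem_coe]
  refine (measure_biUnion_finset_le _ _).trans ?_
  have hterm : ∀ θ ∈ (sumset Θ m).erase 0,
      volume (Set.Ioo (-θ - Real.sqrt ε / (4 * |θ|)) (-θ + Real.sqrt ε / (4 * |θ|))) ≤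
        ENNReal.ofReal (Real.sqrt ε * (m : ℝ) ^ P₀ / (2 * c)) := by
    intro θ hθ
    obtain ⟨hne, hmem⟩ := Finset.mem_erase.1 hθ
    have hd := hdioph m hm θ hmem hne
    have hpos : 0 < |θ| := abs_pos.2 hne
    rw [Real.volume_Ioo]
    apply ENNReal.ofReal_le_ofReal
    have hp : 0 < (m:ℝ) ^ P₀ := Real.rpow_pos_of_pos hm0 _
    rw [Real.rpow_neg hm0.le, ← div_eq_mul_inv, div_le_iff₀ hp] at hd
    have e : -θ + Real.sqrt ε / (4 * |θ|) - (-θ - Real.sqrt ε / (4 * |θ|))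
        = Real.sqrt ε / (2 * |θ|) := by
      field_simp
      ring
    rw [e, div_le_div_iff₀ (by positivity) (by positivity)]
    have := mul_le_mul_of_nonneg_left hd (Real.sqrt_nonneg ε)
    nlinarith
  refine (Finset.sum_le_card_nsmul _ _ _ hterm).trans ?_
  rw [nsmul_eq_mul, ENNReal.ofReal_mul (by positivity)]
  gcongr
  rw [← ENNReal.ofReal_natCast]
  apply ENNReal.ofReal_le_ofReal
  have h1 : ((sumset Θ m).erase 0).card ≤ (m + 1) ^ (2 * l) :=
    (Finset.card_le_card (Finset.erase_subset _ _)).trans (sumset_card_le Θ l h0 hcard m)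
  exact_mod_cast h1

/-- Under `card Θ = 2l + 1`, the Diophantine condition, `P > 24NP₀` and `P > 36Nl`, the
resonant set `BR = ⋃_{θ ∈ Θ_{3N L̃} \ {0}} (−θ − √ε/(4|θ|), −θ + √ε/(4|θ|))`, with
`L̃ = ⌈ε^{-2N/P}⌉`, has Lebesgue measure less than `ε^{1/6}` for all small `ε`. -/
theorem stmt_9 (l : ℕ) (Θ : Finset ℝ) (hsym : ∀ x ∈ Θ, -x ∈ Θ) (h0 : (0:ℝ) ∈ Θ)
    (hcard : Θ.card = 2 * l + 1)
    (c P₀ : ℝ) (hc : 0 < c) (hP₀ : 0 < P₀)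
    (hdioph : ∀ m : ℕ, 1 ≤ m → ∀ θ ∈ sumset Θ m, θ ≠ 0 → c * (m : ℝ) ^ (-P₀) ≤ |θ|)
    (N : ℕ) (hN : 1 ≤ N) (P : ℝ) (hP₁ : 24 * (N : ℝ) * P₀ < P)
    (hP₂ : 36 * (N : ℝ) * l < P) :
    ∃ ε₁ : ℝ, ε₁ ∈ Set.Ioo (0:ℝ) 1 ∧ ∀ ε : ℝ, ε ∈ Set.Ioo 0 ε₁ →
      volume (⋃ θ ∈ ((sumset Θ (3 * N * ⌈ε ^ (-(2 * (N : ℝ)) / P)⌉₊) : Set ℝ) \ {0}),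
          Set.Ioo (-θ - Real.sqrt ε / (4 * |θ|)) (-θ + Real.sqrt ε / (4 * |θ|))) <
        ENNReal.ofReal (ε ^ ((1 : ℝ) / 6)) := by
  have hN0 : (1:ℝ) ≤ N := by exact_mod_cast hN
  have hP : 0 < P := lt_trans (by positivity) hP₁
  set a : ℝ := 2 * (N : ℝ) / P with ha
  have ha0 : 0 < a := by positivity
  have haP : a * P = 2 * N := by rw [ha]; field_simp
  set s : ℝ := 2 * (l : ℝ) + P₀ with hs
  have hs0 : 0 < s := by positivity
  have has : a * s ≤ 7 / 36 := by
    rw [ha, hs, div_mul_eq_mul_div, div_le_iff₀ hP]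
    nlinarith
  set K : ℝ := (12 * (N:ℝ)) ^ s / (2 * c) with hK
  have hK0 : 0 < K := by positivity
  have hb0 : (0:ℝ) < 1 / (K + 2) := by positivity
  have hb1 : 1 / (K + 2) < 1 := by rw [div_lt_one (by positivity)]; linarith
  refine ⟨(1 / (K + 2)) ^ ((36:ℝ) / 5), ⟨by positivity,
    Real.rpow_lt_one hb0.le hb1 (by norm_num)⟩, ?_⟩
  rintro ε ⟨hε0, hε1⟩
  have hεlt1 : ε < 1 := hε1.trans (Real.rpow_lt_one hb0.le hb1 (by norm_num))
  have hsmall : ε ^ ((5:ℝ) / 36) < 1 / (K + 2) := by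
    have := Real.rpow_lt_rpow hε0.le hε1 (show (0:ℝ) < 5 / 36 by norm_num)
    rwa [← Real.rpow_mul hb0.le, show (36:ℝ) / 5 * (5 / 36) = 1 by norm_num,
      Real.rpow_one] at this
  have hexp : -(2 * (N : ℝ)) / P = -a := by rw [ha, neg_div]
  rw [hexp]
  have hy1 : 1 ≤ ε ^ (-a) :=
    Real.one_le_rpow_of_pos_of_le_one_of_nonpos hε0 hεlt1.le (by linarith)
  have hL1 : 1 ≤ ⌈ε ^ (-a)⌉₊ := Nat.one_le_ceil_iff.2 (by linarith)
  have hL2 : (⌈ε ^ (-a)⌉₊ : ℝ) < ε ^ (-a) + 1 := Nat.ceil_lt_add_one (by linarith)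
  generalize ⌈ε ^ (-a)⌉₊ = L at hL1 hL2 ⊢
  have hm : 1 ≤ 3 * N * L := by nlinarith [Nat.mul_le_mul hN hL1]
  refine (measure_bound l Θ h0 hcard c P₀ hc hdioph (3 * N * L) hm ε).trans_lt ?_
  have hmR : (1:ℝ) ≤ ((3 * N * L : ℕ) : ℝ) := by exact_mod_cast hm
  have hmX : ((3 * N * L : ℕ) : ℝ) ≤ 6 * N * ε ^ (-a) := by
    push_cast
    nlinarith
  generalize ((3 * N * L : ℕ) : ℝ) = M at hmR hmX ⊢
  rw [ENNReal.ofReal_lt_ofReal_iff (by positivity)]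
  set X : ℝ := 12 * N * ε ^ (-a) with hX
  have hX0 : 0 < X := by positivity
  have h1 : (M + 1) ^ (2 * l) ≤ X ^ (2 * l) := by
    gcongr
    linarith
  have h2 : M ^ P₀ ≤ X ^ P₀ := by
    gcongr
    linarith
  have h3 : X ^ (2 * l) * X ^ P₀ = (12 * (N:ℝ)) ^ s * ε ^ (-a * s) := by
    rw [← Real.rpow_natCast, ← Real.rpow_add hX0]
    have : ((2 * l : ℕ) : ℝ) + P₀ = s := by rw [hs]; push_cast; ring
    rw [this, hX, Real.mul_rpow (by positivity) (by positivity), ← Real.rpow_mul hε0.le]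
  calc (M + 1) ^ (2 * l) * (Real.sqrt ε * M ^ P₀ / (2 * c))
      ≤ X ^ (2 * l) * (Real.sqrt ε * X ^ P₀ / (2 * c)) := by gcongr
    _ = K * (ε ^ (-a * s) * ε ^ ((1:ℝ) / 2)) := by
        rw [hK, Real.sqrt_eq_rpow]
        linear_combination (ε ^ ((1:ℝ) / 2) / (2 * c)) * h3
    _ = K * ε ^ (-a * s + 1 / 2) := by rw [Real.rpow_add hε0]
    _ ≤ K * ε ^ ((5:ℝ) / 36 + 1 / 6) := by
        refine mul_le_mul_of_nonneg_left ?_ hK0.le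
        exact Real.rpow_le_rpow_of_exponent_ge hε0 hεlt1.le (by linarith)
    _ = (K * ε ^ ((5:ℝ) / 36)) * ε ^ ((1:ℝ) / 6) := by rw [Real.rpow_add hε0]; ring
    _ < 1 * ε ^ ((1:ℝ) / 6) := by
        refine mul_lt_mul_of_pos_right ?_ (by positivity)
        rw [lt_div_iff₀ (by positivity)] at hsmall
        nlinarith [Real.rpow_pos_of_pos hε0 ((5:ℝ) / 36)]
    _ = ε ^ ((1:ℝ) / 6) := one_mul _
end

section
/- Let θ₀ be a nonzero real number, K ∈ ℝ, h₀ ∈ [0, θ₀²/4], and a ∈ (0, |θ₀|/6]. Let u, v : [−a, a] → ℝ satisfy 0 ≤ u(ζ) ≤ 2 and 2θ₀² ≤ v(ζ) ≤ 8θ₀² for all ζ ∈ [−a, a], and define σ_±(ζ) := K + ζ²·u(ζ) ± (ζ²·v(ζ) + h₀²)^{1/2}. Then for every ζ ∈ [−a, a] one has σ₋(ζ) ≤ K − h₀ and σ₊(ζ) ≥ K + h₀, with equality exactly at ζ = 0; consequently the maximum of σ₋ over [−a, a] is σ₋(0) = K − h₀, the minimum of σ₊ over [−a, a] is σ₊(0)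 = K + h₀, and the open interval (K − h₀, K + h₀), of length 2h₀, is disjoint from the ranges of σ₋ and σ₊. -/
/-- For the model eigenvalue branches `σ_±(ζ) = K + ζ²u(ζ) ± (ζ²v(ζ) + h₀²)^{1/2}` over the
resonance zone, one has `σ₋ ≤ K − h₀ ≤ K + h₀ ≤ σ₊` on `[−a, a]` with equality exactly at
`ζ = 0`; hence the maximum of `σ₋` is `σ₋(0) = K − h₀`, the minimum of `σ₊` is
`σ₊(0) = K + h₀`, and the open interval `(K − h₀, K + h₀)` is disjoint from both ranges. -/
theorem stmt_11 (θ₀ : ℝ) (hθ₀ : θ₀ ≠ 0) (K h₀ : ℝ)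
    (hh₀ : h₀ ∈ Set.Icc (0:ℝ) (θ₀ ^ 2 / 4)) (a : ℝ) (ha : a ∈ Set.Ioc (0:ℝ) (|θ₀| / 6))
    (u v : ℝ → ℝ)
    (hu : ∀ ζ ∈ Set.Icc (-a) a, 0 ≤ u ζ ∧ u ζ ≤ 2)
    (hv : ∀ ζ ∈ Set.Icc (-a) a, 2 * θ₀ ^ 2 ≤ v ζ ∧ v ζ ≤ 8 * θ₀ ^ 2)
    (σm σp : ℝ → ℝ)
    (hσm : ∀ ζ : ℝ, σm ζ = K + ζ ^ 2 * u ζ - Real.sqrt (ζ ^ 2 * v ζ + h₀ ^ 2))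
    (hσp : ∀ ζ : ℝ, σp ζ = K + ζ ^ 2 * u ζ + Real.sqrt (ζ ^ 2 * v ζ + h₀ ^ 2)) :
    (∀ ζ ∈ Set.Icc (-a) a, σm ζ ≤ K - h₀) ∧
    (∀ ζ ∈ Set.Icc (-a) a, K + h₀ ≤ σp ζ) ∧
    (∀ ζ ∈ Set.Icc (-a) a, (σm ζ = K - h₀ ↔ ζ = 0)) ∧
    (∀ ζ ∈ Set.Icc (-a) a, (σp ζ = K + h₀ ↔ ζ = 0)) ∧
    IsMaxOn σm (Set.Icc (-a) a) 0 ∧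
    IsMinOn σp (Set.Icc (-a) a) 0 ∧
    σm 0 = K - h₀ ∧ σp 0 = K + h₀ ∧
    (∀ ζ ∈ Set.Icc (-a) a, σm ζ ∉ Set.Ioo (K - h₀) (K + h₀)) ∧
    (∀ ζ ∈ Set.Icc (-a) a, σp ζ ∉ Set.Ioo (K - h₀) (K + h₀)) := by
  obtain ⟨hh0, hh1⟩ := hh₀
  obtain ⟨ha0, ha1⟩ := ha
  have hθ : 0 < θ₀ ^ 2 := by positivity
  have m0 : σm 0 = K - h₀ := by rw [hσm]; simp [Real.sqrt_sq hh0]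
  have p0 : σp 0 = K + h₀ := by rw [hσp]; simp [Real.sqrt_sq hh0]
  have key : ∀ ζ ∈ Set.Icc (-a) a, ζ ≠ 0 → σm ζ < K - h₀ ∧ K + h₀ < σp ζ := by
    intro ζ hζ hne
    obtain ⟨u0, u2⟩ := hu ζ hζ
    obtain ⟨v1, -⟩ := hv ζ hζ
    have hz : 0 < ζ ^ 2 := by positivity
    have hz2 : ζ ^ 2 ≤ θ₀ ^ 2 / 36 := by
      have h1 : |ζ| ≤ |θ₀| / 6 := (abs_le.2 hζ).trans ha1
      have h2 : |ζ| ^ 2 ≤ (|θ₀| / 6) ^ 2 := pow_le_pow_left₀ (abs_nonneg _) h1 2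
      rw [div_pow, sq_abs, sq_abs] at h2
      linarith
    have e1 : h₀ * u ζ ≤ θ₀ ^ 2 / 4 * 2 := mul_le_mul hh1 u2 u0 (by positivity)
    have e2 : u ζ ^ 2 ≤ 4 := by nlinarith
    have e3 : ζ ^ 2 * u ζ ^ 2 ≤ θ₀ ^ 2 / 36 * 4 :=
      mul_le_mul hz2 e2 (by positivity) (by positivity)
    have e4 : 2 * (h₀ * u ζ) + ζ ^ 2 * u ζ ^ 2 < v ζ := by linarith
    have e5 := mul_lt_mul_of_pos_left e4 hz
    have e6 : h₀ + ζ ^ 2 * u ζ < Real.sqrt (ζ ^ 2 * v ζ + h₀ ^ 2) := by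
      apply Real.lt_sqrt_of_sq_lt
      linarith
    have e7 : 0 ≤ ζ ^ 2 * u ζ := by positivity
    rw [hσm, hσp]
    constructor <;> linarith
  have A : ∀ ζ ∈ Set.Icc (-a) a, σm ζ ≤ K - h₀ := by
    intro ζ hζ
    by_cases h : ζ = 0
    · rw [h, m0]
    · exact (key ζ hζ h).1.le
  have B : ∀ ζ ∈ Set.Icc (-a) a, K + h₀ ≤ σp ζ := by
    intro ζ hζ
    by_cases h : ζ = 0
    · rw [h, p0]
    · exact (key ζ hζ h).2.le
  refine ⟨A, B, ?_, ?_, ?_, ?_, m0, p0, ?_, ?_⟩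
  · intro ζ hζ
    refine ⟨fun h => ?_, fun h => by rw [h, m0]⟩
    by_contra hne
    exact (key ζ hζ hne).1.ne h
  · intro ζ hζ
    refine ⟨fun h => ?_, fun h => by rw [h, p0]⟩
    by_contra hne
    exact (key ζ hζ hne).2.ne h.symm
  · intro ζ hζ
    show σm ζ ≤ σm 0
    rw [m0]; exact A ζ hζ
  · intro ζ hζ
    show σp 0 ≤ σp ζ
    rw [p0]; exact B ζ hζ
  · intro ζ hζ h
    exact absurd h.1 (not_lt.2 (A ζ hζ))
  · intro ζ hζ h
    exact absurd h.2 (not_lt.2 (B ζ hζ))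
end

section
/- Let N ≥ 2 be a natural number, τ < 0 a real number, and let f_2, …, f_N : ℝ → ℝ be infinitely differentiable functions that are bounded together with all their derivatives. Then there exist real numbers a_1, …, a_{N−1}, a constant C > 0, and ε₁ > 0 such that for every ε ∈ (0, ε₁) and every measurable function r : ℝ → ℝ with sup_ξ |r(ξ)| ≤ ε^{N+1}, the Lebesgue measure of the set S := {ξ ∈ ℝ : ξ² + ετ + Σ_{p=2}^{N} ε^p f_p(ξ) + r(ξ) < 0} satisfies |meas(S) − ε^{1/2}(2|τ|^{1/2} + Σ_{p=1}^{N−1} a_p ε^p)| ≤ C·ε^{N + 1/2}. -/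
open MeasureTheory

open Filter Topology in
lemma aux_taylor (n : ℕ) (hn : 0 < n) (φ : ℝ → ℝ) (h : ContDiffAt ℝ n φ 0) :
    ∃ c : ℕ → ℝ, c 0 = φ 0 ∧ ∃ C : ℝ, 0 < C ∧ ∀ᶠ s in 𝓝 (0:ℝ),
      |φ s - ∑ k ∈ Finset.range n, c k * s ^ k| ≤ C * |s| ^ n := by
  obtain ⟨u, hu, hφ⟩ := h.contDiffOn le_rfl (by simp)
  obtain ⟨δ, hδ, hb⟩ := Metric.mem_nhds_iff.1 hu
  have h1 := taylor_isLittleO (convex_ball (0:ℝ) δ) (Metric.mem_ball_self hδ) (hφ.mono hb)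
  rw [nhdsWithin_eq_nhds.2 (Metric.ball_mem_nhds _ hδ)] at h1
  have h2 := h1.bound (c := 1) one_pos
  set c : ℕ → ℝ := fun k => ((k.factorial : ℝ)⁻¹ * iteratedDerivWithin k φ (Metric.ball 0 δ) 0)
    with hc
  refine ⟨c, by simp [hc], 1 + |c n|, by positivity, ?_⟩
  filter_upwards [h2] with s hs
  simp only [taylor_within_apply, sub_zero, Real.norm_eq_abs, smul_eq_mul, one_mul, abs_pow] at hs
  have e : ∑ k ∈ Finset.range (n + 1), (k.factorial : ℝ)⁻¹ * s ^ k *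
      iteratedDerivWithin k φ (Metric.ball 0 δ) 0
      = ∑ k ∈ Finset.range n, c k * s ^ k + c n * s ^ n := by
    rw [← Finset.sum_range_succ]
    refine Finset.sum_congr rfl fun k _ => ?_
    simp only [hc]; ring
  rw [e] at hs
  have : φ s - ∑ k ∈ Finset.range n, c k * s ^ k =
    (φ s - (∑ k ∈ Finset.range n, c k * s ^ k + c n * s ^ n)) + c n * s ^ n := by ring
  rw [this]
  refine (abs_add_le _ _).trans ?_
  rw [abs_mul, abs_pow]
  linarith

open Filter Topology in
lemma aux_ift (n : ℕ) (hn : 0 < n) (G : ℝ × ℝ → ℝ) (hG : ContDiff ℝ n G) (b : ℝ) (hb : 0 < b)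
    (h0 : ∀ y, G (0, y) = y ^ 2 - b ^ 2) :
    ∃ φ : ℝ → ℝ, φ 0 = b ∧ ContDiffAt ℝ n φ 0 ∧ ∀ᶠ s in 𝓝 (0:ℝ), G (s, φ s) = 0 := by
  have cdf : ContDiffAt ℝ n G (0, b) := hG.contDiffAt
  have pn : (n : WithTop ℕ∞) ≠ 0 := by exact_mod_cast hn.ne'
  have hd : HasFDerivAt G (fderiv ℝ G (0, b)) (0, b) :=
    (cdf.differentiableAt pn).hasFDerivAt
  have h1 : HasDerivAt (fun y : ℝ => G (0, y))
      ((fderiv ℝ G (0, b)) ((0 : ℝ), (1 : ℝ))) b :=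
    hd.comp_hasDerivAt b ((hasDerivAt_const b (0:ℝ)).prodMk (hasDerivAt_id b))
  have h2 : HasDerivAt (fun y : ℝ => G (0, y)) (2 * b) b := by
    have : (fun y : ℝ => G (0, y)) = fun y => y ^ 2 - b ^ 2 := funext h0
    rw [this]
    simpa using (hasDerivAt_pow 2 b).sub_const (b ^ 2)
  have h3 := h1.unique h2
  have if₂ : (fderiv ℝ G (0, b) ∘L .inr ℝ ℝ ℝ).IsInvertible := by
    have hb2 : (2 * b) ≠ 0 := by positivity
    refine ⟨ContinuousLinearEquiv.unitsEquivAut ℝ (Units.mk0 (2 * b) hb2), ?_⟩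
    ext
    simp [h3]
  refine ⟨cdf.implicitFunction pn if₂, cdf.implicitFunction_apply_self pn if₂,
    cdf.contDiffAt_implicitFunction pn if₂, ?_⟩
  filter_upwards [cdf.eventually_apply_implicitFunction pn if₂] with s hs
  rw [hs, h0]; ring

lemma aux_even (c : ℕ → ℝ) (s : ℝ) (N : ℕ) :
    ∑ k ∈ Finset.range (2 * N), c k * s ^ k + ∑ k ∈ Finset.range (2 * N), c k * (-s) ^ k =
      ∑ p ∈ Finset.range N, 2 * c (2 * p) * (s ^ 2) ^ p := by
  induction N with
  | zero => simp
  | succ N ih =>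
    rw [show 2 * (N + 1) = 2 * N + 1 + 1 by ring, Finset.sum_range_succ, Finset.sum_range_succ,
      Finset.sum_range_succ, Finset.sum_range_succ, Finset.sum_range_succ, ← ih]
    have e1 : (-s) ^ (2 * N) = s ^ (2 * N) := by rw [pow_mul, pow_mul, neg_sq]
    rw [pow_succ (-s), pow_succ s, e1, ← pow_mul]
    ring

lemma aux_even' (c : ℕ → ℝ) (s : ℝ) (N : ℕ) (hN : 2 ≤ N) :
    ∑ k ∈ Finset.range (2 * N), c k * s ^ k + ∑ k ∈ Finset.range (2 * N), c k * (-s) ^ k =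
      2 * c 0 + ∑ p ∈ Finset.Icc 1 (N - 1), 2 * c (2 * p) * (s ^ 2) ^ p := by
  rw [aux_even, Finset.range_eq_Ico, Finset.sum_eq_sum_Ico_succ_bot (by omega)]
  have : Finset.Icc 1 (N - 1) = Finset.Ico (0 + 1) N := by
    ext x; simp only [Finset.mem_Icc, Finset.mem_Ico]; omega
  rw [this]; simp

/-- the Lipschitz constant of the perturbation -/
lemma aux_lip (N : ℕ) (f : ℕ → ℝ → ℝ)
    (hf : ∀ p : ℕ, 2 ≤ p → p ≤ N → ContDiff ℝ (⊤ : ℕ∞) (f p))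
    (hfb : ∀ p : ℕ, 2 ≤ p → p ≤ N → ∀ k : ℕ, ∃ B : ℝ,
      ∀ ξ : ℝ, |iteratedDeriv k (f p) ξ| ≤ B) :
    ∃ L : ℝ, 0 < L ∧ ∀ s : ℝ, |s| ≤ 1 → ∀ x y : ℝ,
      |∑ p ∈ Finset.Icc 2 N, s ^ (2 * (p - 1)) * f p (s * x) -
        ∑ p ∈ Finset.Icc 2 N, s ^ (2 * (p - 1)) * f p (s * y)| ≤ s ^ 2 * L * |x - y| := by
  have : ∀ p : ℕ, ∃ B : ℝ, 0 ≤ B ∧ (2 ≤ p → p ≤ N → ∀ x y, |f p x - f p y| ≤ B * |x - y|) := by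
    intro p
    by_cases h : 2 ≤ p ∧ p ≤ N
    · obtain ⟨B, hB⟩ := hfb p h.1 h.2 1
      refine ⟨B, (abs_nonneg _).trans (hB 0), fun _ _ x y => ?_⟩
      have hd : Differentiable ℝ (f p) := (hf p h.1 h.2).differentiable (by simp)
      refine convex_univ.norm_image_sub_le_of_norm_deriv_le (fun z _ => hd z) (fun z _ => ?_)
        (Set.mem_univ y) (Set.mem_univ x)
      simpa [iteratedDeriv_one] using hB z
    · exact ⟨0, le_rfl, fun h1 h2 => absurd ⟨h1, h2⟩ h⟩
  choose B hB0 hB using this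
  refine ⟨∑ p ∈ Finset.Icc 2 N, B p + 1, ?_, fun s hs x y => ?_⟩
  · have := Finset.sum_nonneg (s := Finset.Icc 2 N) fun p _ => hB0 p
    linarith
  rw [← Finset.sum_sub_distrib]
  have hs2 : s ^ 2 ≤ 1 := by rw [← sq_abs]; exact pow_le_one₀ (abs_nonneg _) hs
  refine (Finset.abs_sum_le_sum_abs _ _).trans ?_
  calc _ ≤ ∑ p ∈ Finset.Icc 2 N, s ^ 2 * B p * |x - y| := by
        refine Finset.sum_le_sum fun p hp => ?_
        rw [Finset.mem_Icc] at hp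
        rw [← mul_sub, abs_mul]
        have h1 : |s ^ (2 * (p - 1))| ≤ s ^ 2 := by
          rw [pow_mul, abs_of_nonneg (by positivity)]
          exact pow_le_of_le_one (sq_nonneg _) hs2 (by omega)
        have h2 : |f p (s * x) - f p (s * y)| ≤ B p * |x - y| := by
          refine (hB p hp.1 hp.2 _ _).trans ?_
          rw [← mul_sub, abs_mul]
          refine mul_le_mul_of_nonneg_left ?_ (hB0 p)
          exact mul_le_of_le_one_left (abs_nonneg _) hs
        calc _ ≤ s ^ 2 * (B p * |x - y|) := by gcongr
          _ = _ := by ring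
    _ = s ^ 2 * (∑ p ∈ Finset.Icc 2 N, B p) * |x - y| := by
        rw [Finset.mul_sum, Finset.sum_mul]
    _ ≤ _ := by
        have : 0 ≤ s ^ 2 * |x - y| := by positivity
        nlinarith

/-- sign of `y² + τ + h y` away from a root `u`, for `y ≥ 0` -/
lemma aux_sign (h : ℝ → ℝ) (τ c q u η : ℝ) (hc : 0 < c) (hcu : c ≤ u) (hq : q ≤ c / 2)
    (hl : ∀ x y, |h x - h y| ≤ q * |x - y|) (hu : u ^ 2 + τ + h u = 0) (hη : 0 < η)
    (y : ℝ) (hy : 0 ≤ y) :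
    (u + 2 / c * η < y → η < y ^ 2 + τ + h y) ∧ (y < u - 2 / c * η → y ^ 2 + τ + h y < -η) := by
  have hk : 0 < 2 / c * η := by positivity
  have hk2 : 2 / c * η * (c / 2) = η := by field_simp
  have hh := abs_le.1 (hl y u)
  constructor
  · intro hyu
    rw [abs_of_pos (by linarith)] at hh
    have h1 : 2 / c * η * (c / 2) < (y - u) * (c / 2) :=
      mul_lt_mul_of_pos_right (by linarith) (by linarith)
    have h2 : (y - u) * (c / 2) ≤ (y - u) * (y + u - q) :=
      mul_le_mul_of_nonneg_left (by linarith) (by linarith)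
    nlinarith
  · intro hyu
    rw [abs_of_neg (by linarith)] at hh
    have h1 : 2 / c * η * (c / 2) < (u - y) * (c / 2) :=
      mul_lt_mul_of_pos_right (by linarith) (by linarith)
    have h2 : (u - y) * (c / 2) ≤ (u - y) * (y + u - q) :=
      mul_le_mul_of_nonneg_left (by linarith) (by linarith)
    nlinarith

lemma aux_meas (S : Set ℝ) (A B A' B' : ℝ) (h1 : Set.Ioo (-A) B ⊆ S)
    (h2 : S ⊆ Set.Icc (-A') B') (h0 : 0 ≤ A' + B') :
    A + B ≤ (volume S).toReal ∧ (volume S).toReal ≤ A' + B' := by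
  have hle : volume S ≤ ENNReal.ofReal (A' + B') := by
    refine (measure_mono h2).trans ?_
    rw [Real.volume_Icc]; exact ENNReal.ofReal_le_ofReal (by linarith)
  have hge : ENNReal.ofReal (A + B) ≤ volume S := by
    refine le_trans ?_ (measure_mono h1)
    rw [Real.volume_Ioo]; exact ENNReal.ofReal_le_ofReal (by linarith)
  exact ⟨(ENNReal.ofReal_le_iff_le_toReal (hle.trans_lt ENNReal.ofReal_lt_top).ne).1 hge,
    ENNReal.toReal_le_of_le_ofReal h0 hle⟩

/-- Expansion of the integrated density of states at the bottom of the spectrum when the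
mean value `τ < 0`: the measure of `{ξ : ξ² + ετ + Σ_{p=2}^N ε^p f_p(ξ) + r(ξ) < 0}` equals
`ε^{1/2}(2|τ|^{1/2} + Σ_{p=1}^{N−1} a_p ε^p)` up to an error `C ε^{N+1/2}`, uniformly over
perturbations `r` bounded by `ε^{N+1}`. -/
theorem stmt_13 (N : ℕ) (hN : 2 ≤ N) (τ : ℝ) (hτ : τ < 0)
    (f : ℕ → ℝ → ℝ)
    (hf : ∀ p : ℕ, 2 ≤ p → p ≤ N → ContDiff ℝ (⊤ : ℕ∞) (f p))
    (hfb : ∀ p : ℕ, 2 ≤ p → p ≤ N → ∀ k : ℕ, ∃ B : ℝ,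
      ∀ ξ : ℝ, |iteratedDeriv k (f p) ξ| ≤ B) :
    ∃ a : ℕ → ℝ, ∃ C : ℝ, 0 < C ∧ ∃ ε₁ : ℝ, 0 < ε₁ ∧
      ∀ ε : ℝ, ε ∈ Set.Ioo 0 ε₁ →
      ∀ r : ℝ → ℝ, Measurable r → (∀ ξ : ℝ, |r ξ| ≤ ε ^ (N + 1)) →
        |(volume {ξ : ℝ |
            ξ ^ 2 + ε * τ + ∑ p ∈ Finset.Icc 2 N, ε ^ p * f p ξ + r ξ < 0}).toReal -
          Real.sqrt ε * (2 * Real.sqrt |τ| + ∑ p ∈ Finset.Icc 1 (N - 1), a p * ε ^ p)| ≤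
          C * ε ^ N * Real.sqrt ε := by
  obtain ⟨L, hL, hlip⟩ := aux_lip N f hf hfb
  set b := Real.sqrt |τ| with hb
  have hbpos : 0 < b := Real.sqrt_pos.2 (abs_pos.2 hτ.ne)
  have hb2 : b ^ 2 = -τ := by rw [hb, Real.sq_sqrt (abs_nonneg _), abs_of_neg hτ]
  set h : ℝ → ℝ → ℝ := fun s y => ∑ p ∈ Finset.Icc 2 N, s ^ (2 * (p - 1)) * f p (s * y) with hh
  have hsym : ∀ s y, h (-s) (-y) = h s y := by
    intro s y
    simp only [hh]
    refine Finset.sum_congr rfl fun p _ => ?_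
    rw [pow_mul, pow_mul, neg_sq, neg_mul_neg]
  have hG : ContDiff ℝ (2 * N : ℕ) (fun z : ℝ × ℝ => z.2 ^ 2 + τ + h z.1 z.2) := by
    have : ContDiff ℝ (2 * N : ℕ) (fun z : ℝ × ℝ => h z.1 z.2) := by
      simp only [hh]
      refine ContDiff.sum fun p hp => ?_
      rw [Finset.mem_Icc] at hp
      have h1 : ContDiff ℝ (2 * N : ℕ) (f p) :=
        (hf p hp.1 hp.2).of_le (WithTop.coe_le_coe.2 (le_top (a := ((2 * N : ℕ) : ℕ∞))))
      exact (contDiff_fst.pow _).mul (h1.comp (contDiff_fst.mul contDiff_snd))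
    exact ((contDiff_snd.pow 2).add contDiff_const).add this
  obtain ⟨φ, hφ0, hφc, hφ⟩ := aux_ift (2 * N) (by omega) _ hG b hbpos (by
    intro y
    have : h 0 y = 0 := by
      simp only [hh]
      refine Finset.sum_eq_zero fun p hp => ?_
      rw [Finset.mem_Icc] at hp
      rw [zero_pow (by omega), zero_mul]
    simp only [this, hb2]; ring)
  obtain ⟨c, hc0, C, hC, ht⟩ := aux_taylor (2 * N) (by omega) φ hφc
  have hnear : ∀ᶠ s in nhds (0:ℝ), b / 2 < φ s :=
    hφc.continuousAt.eventually (lt_mem_nhds (by rw [hφ0]; linarith))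
  obtain ⟨δ, hδ, hall⟩ := Metric.eventually_nhds_iff.1 (hφ.and (ht.and hnear))
  set d := min (min δ 1) (b / 4 / L) with hd
  have hdpos : 0 < d := by positivity
  refine ⟨fun p => 2 * c (2 * p), 2 * C + 2 * (2 / (b / 2)), by positivity, d ^ 2, by positivity, ?_⟩
  intro ε hε r _ hr
  set s := Real.sqrt ε with hs
  have hεpos : 0 < ε := hε.1
  have hspos : 0 < s := Real.sqrt_pos.2 hεpos
  have hs2 : s ^ 2 = ε := Real.sq_sqrt hεpos.le
  have hsd : s < d := by
    rw [hs, Real.sqrt_lt' hdpos]; exact hε.2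
  have hsδ : s < δ := hsd.trans_le ((min_le_left _ _).trans (min_le_left _ _))
  have hs1 : s < 1 := hsd.trans_le ((min_le_left _ _).trans (min_le_right _ _))
  have hsL : s < b / 4 / L := hsd.trans_le (min_le_right _ _)
  have hq : s ^ 2 * L ≤ b / 2 / 2 := by
    rw [lt_div_iff₀ hL] at hsL
    nlinarith [mul_pos hspos hL]
  obtain ⟨hp1, hp2, hp3⟩ := hall (y := s) (by simpa [abs_of_pos hspos] using hsδ)
  obtain ⟨hm1, hm2, hm3⟩ := hall (y := -s) (by simpa [abs_of_pos hspos] using hsδ)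
  have hη : 0 < ε ^ N := by positivity
  have key1 := aux_sign (h s) τ (b / 2) (s ^ 2 * L) (φ s) (ε ^ N) (by positivity) hp3.le hq
    (hlip s (by rw [abs_of_pos hspos]; exact hs1.le)) hp1 hη
  have key2 := aux_sign (h (-s)) τ (b / 2) (s ^ 2 * L) (φ (-s)) (ε ^ N) (by positivity) hm3.le hq
    (by have := hlip (-s) (by rw [abs_neg, abs_of_pos hspos]; exact hs1.le); rwa [neg_sq] at this) hm1 hη
  set K := 2 / (b / 2) with hK
  have hKpos : 0 < K := by positivity
  have hscale : ∀ y, (s * y) ^ 2 + ε * τ + ∑ p ∈ Finset.Icc 2 N, ε ^ p * f p (s * y)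
      = ε * (y ^ 2 + τ + h s y) := by
    intro y
    have : ∑ p ∈ Finset.Icc 2 N, ε ^ p * f p (s * y) = ε * h s y := by
      simp only [hh, Finset.mul_sum]
      refine Finset.sum_congr rfl fun p hp => ?_
      rw [Finset.mem_Icc] at hp
      obtain ⟨k, rfl⟩ : ∃ k, p = k + 1 := ⟨p - 1, by omega⟩
      rw [Nat.add_sub_cancel, pow_mul, hs2]; ring
    rw [this, mul_pow, hs2]; ring
  have hrr : ∀ ξ, -(ε * ε ^ N) ≤ r ξ ∧ r ξ ≤ ε * ε ^ N := by
    intro ξ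
    have := abs_le.1 (hr ξ)
    rwa [pow_succ, mul_comm] at this
  have hM := aux_meas {ξ : ℝ |
      ξ ^ 2 + ε * τ + ∑ p ∈ Finset.Icc 2 N, ε ^ p * f p ξ + r ξ < 0}
    (s * (φ (-s) - K * ε ^ N)) (s * (φ s - K * ε ^ N))
    (s * (φ (-s) + K * ε ^ N)) (s * (φ s + K * ε ^ N)) (by
      intro ξ hξ
      obtain ⟨y, rfl⟩ : ∃ y, ξ = s * y := ⟨ξ / s, by field_simp⟩
      have hy1 : -(φ (-s) - K * ε ^ N) < y := by
        have := hξ.1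
        rw [← mul_neg] at this
        exact lt_of_mul_lt_mul_left this hspos.le
      have hy2 : y < φ s - K * ε ^ N := lt_of_mul_lt_mul_left hξ.2 hspos.le
      have hlt : y ^ 2 + τ + h s y < -ε ^ N := by
        rcases le_total 0 y with h0 | h0
        · exact (key1 y h0).2 hy2
        · have := (key2 (-y) (by linarith)).2 (by linarith)
          rwa [hsym, neg_sq] at this
      simp only [Set.mem_ofPred_eq]
      rw [hscale]
      have := mul_lt_mul_of_pos_left hlt hεpos
      linarith [(hrr (s * y)).2]) (by
      intro ξ hξ
      obtain ⟨y, rfl⟩ : ∃ y, ξ = s * y := ⟨ξ / s, by field_simp⟩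
      simp only [Set.mem_ofPred_eq] at hξ
      rw [hscale] at hξ
      have hlt : y ^ 2 + τ + h s y < ε ^ N := by
        have : ε * (y ^ 2 + τ + h s y) < ε * ε ^ N := by linarith [(hrr (s * y)).1]
        exact lt_of_mul_lt_mul_left this hεpos.le
      have hpp : 0 < K * ε ^ N := by positivity
      have hy : -(φ (-s) + K * ε ^ N) ≤ y ∧ y ≤ φ s + K * ε ^ N := by
        rcases le_total 0 y with h0 | h0
        · refine ⟨by linarith, ?_⟩
          by_contra hcon
          exact absurd ((key1 y h0).1 (not_le.1 hcon)) (not_lt.2 hlt.le)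
        · refine ⟨?_, by linarith⟩
          by_contra hcon
          have := (key2 (-y) (by linarith)).1 (by linarith)
          rw [hsym, neg_sq] at this
          linarith
      constructor
      · rw [← mul_neg]; exact mul_le_mul_of_nonneg_left hy.1 hspos.le
      · exact mul_le_mul_of_nonneg_left hy.2 hspos.le) (by
      have : 0 < φ s := by linarith
      have : 0 < φ (-s) := by linarith
      positivity)
  have hev := aux_even' c s N hN
  rw [hs2, hc0, hφ0] at hev
  rw [abs_neg] at hm2
  rw [abs_of_pos hspos, pow_mul, hs2] at hp2 hm2
  have hp2 := abs_le.1 hp2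
  have hm2 := abs_le.1 hm2
  simp only at hev ⊢
  rw [← hev]
  set P := ∑ k ∈ Finset.range (2 * N), c k * s ^ k
  set Q := ∑ k ∈ Finset.range (2 * N), c k * (-s) ^ k
  have e1 : s * (φ s + φ (-s)) ≤ s * (P + Q + 2 * C * ε ^ N) :=
    mul_le_mul_of_nonneg_left (by linarith) hspos.le
  have e2 : s * (P + Q - 2 * C * ε ^ N) ≤ s * (φ s + φ (-s)) :=
    mul_le_mul_of_nonneg_left (by linarith) hspos.le
  rw [abs_le]
  constructor <;> nlinarith [hM.1, hM.2]
end

section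
/- Let N ≥ 2 be a natural number and let f_2, …, f_N : ℝ → ℝ be infinitely differentiable functions that are bounded together with all their derivatives, with f_2(0) < 0. Then there exist real numbers a_1, …, a_{N−2}, a constant C > 0, and ε₁ > 0 such that for every ε ∈ (0, ε₁) and every measurable function r : ℝ → ℝ with sup_ξ |r(ξ)| ≤ ε^{N+1}, the Lebesgue measure of the set S := {ξ ∈ ℝ : ξ² + Σ_{p=2}^{N} ε^p f_p(ξ) + r(ξ) < 0} satisfies |meas(S) − ε(2(−f_2(0))^{1/2} + Σ_{p=1}^{N−2} a_p ε^p)| ≤ C·ε^{N}. -/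
section
open Polynomial

lemma taylor_poly (n : ℕ) (f : ℝ → ℝ) (hf : ContDiff ℝ (⊤ : ℕ∞) f) :
    ∃ T : ℝ[X], T.eval 0 = f 0 ∧ ∃ B : ℝ, 0 ≤ B ∧ ∀ x ∈ Set.Icc (0:ℝ) 1,
      |f x - T.eval x| ≤ B * x ^ (n+1) := by
  obtain ⟨B, hB⟩ := exists_taylor_mean_remainder_bound (f := f) (n := n) (zero_le_one (α := ℝ))
    ((hf.of_le (by exact_mod_cast le_top)).contDiffOn)
  have key : ∀ x, (∑ k ∈ Finset.range (n+1), C (((k.factorial : ℝ))⁻¹ * iteratedDerivWithin k f (Set.Icc 0 1) 0) * X ^ k : ℝ[X]).eval x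
      = taylorWithinEval f n (Set.Icc 0 1) 0 x := by
    intro x
    rw [taylor_within_apply, eval_finsetSum]
    refine Finset.sum_congr rfl fun k _ => ?_
    simp
    ring
  refine ⟨_, (key 0).trans (taylorWithinEval_self _ _ _ _), |B|, abs_nonneg _, fun x hx => ?_⟩
  rw [key]
  refine (hB x hx).trans ?_
  rw [sub_zero]
  exact mul_le_mul_of_nonneg_right (le_abs_self B) (pow_nonneg hx.1 _)

lemma hensel (s : Finset ℕ) (T : ℕ → ℝ[X]) (c : ℝ) (hc : 0 < c) (h2 : 2 ∈ s)
    (hs : ∀ p ∈ s, 2 ≤ p) (hT : (T 2).eval 0 = -c^2) (n : ℕ) :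
    ∃ P : ℝ[X], P.natDegree < n + 1 ∧ P.coeff 0 = c ∧
      X ^ (n+1) ∣ P^2 + ∑ p ∈ s, X^(p-2) * (T p).comp (X * P) := by
  induction n with
  | zero =>
    refine ⟨C c, by simp, by simp, ?_⟩
    rw [zero_add, pow_one, X_dvd_iff, coeff_zero_eq_eval_zero]
    simp only [eval_add, eval_pow, eval_C, eval_finsetSum, eval_mul, eval_X, eval_comp, zero_mul]
    rw [Finset.sum_eq_single_of_mem 2 h2]
    · simp [hT]
    · intro p hp hp2
      have := hs p hp
      rw [zero_pow (by omega), zero_mul]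
  | succ n ih =>
    obtain ⟨P, hd, h0, Q, hQ⟩ := ih
    set b : ℝ := -(Q.coeff 0) / (2*c) with hb
    refine ⟨P + X^(n+1) * C b, ?_, by simp [h0], ?_⟩
    · refine lt_of_le_of_lt (natDegree_add_le _ _) (max_lt (by omega) ?_)
      refine lt_of_le_of_lt (natDegree_mul_C_le _ _) ?_
      simp
    · set d : ℝ[X] := X^(n+1) * C b with hdd
      have h1 : ∀ p ∈ s, X^(n+2) ∣ X^(p-2) * (T p).comp (X * (P + d)) - X^(p-2) * (T p).comp (X * P) := by
        intro p hp
        rw [← mul_sub]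
        refine Dvd.dvd.mul_left ?_ _
        have := sub_dvd_eval_sub (X * (P+d)) (X*P) ((T p).map C)
        simp only [eval_map] at this
        refine dvd_trans ?_ this
        exact ⟨C b, by rw [hdd]; ring⟩
      have h2' := Finset.dvd_sum h1
      rw [Finset.sum_sub_distrib] at h2'
      have h3 : X ∣ Q + 2 * P * C b := by
        rw [X_dvd_iff]
        simp [mul_coeff_zero, h0, hb]
        field_simp
        ring
      have e : (P + d)^2 + ∑ p ∈ s, X^(p-2) * (T p).comp (X * (P + d)) =
        X^(n+1) * (Q + 2 * P * C b) + d^2 + (∑ p ∈ s, X^(p-2) * (T p).comp (X * (P + d)) - ∑ p ∈ s, X^(p-2) * (T p).comp (X * P)) := by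
        linear_combination hQ + 2 * P * hdd
      rw [e]
      refine dvd_add (dvd_add ?_ ?_) h2'
      · rw [pow_succ]; exact mul_dvd_mul_left _ h3
      · exact ⟨X^n * C b ^ 2, by rw [hdd]; ring⟩

lemma poly_bound (R : ℝ[X]) : ∃ D : ℝ, 0 ≤ D ∧ ∀ x ∈ Set.Icc (0:ℝ) 1, |R.eval x| ≤ D := by
  obtain ⟨D, hD⟩ := isCompact_Icc.exists_bound_of_continuousOn (s := Set.Icc (0:ℝ) 1) R.continuous.continuousOn
  exact ⟨|D|, abs_nonneg _, fun x hx => (hD x hx).trans (le_abs_self D)⟩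

lemma poly_near (P : ℝ[X]) (c : ℝ) (hc : 0 < c) (h0 : P.coeff 0 = c) : ∃ e : ℝ, 0 < e ∧
    ∀ x ∈ Set.Ioo (0:ℝ) e, c/2 < P.eval x ∧ P.eval x < 2*c := by
  have h : Filter.Tendsto (fun x => P.eval x) (nhds 0) (nhds c) := by
    have := P.continuous.tendsto 0
    rwa [← coeff_zero_eq_eval_zero, h0] at this
  have h1 := h.eventually (Ioo_mem_nhds (show c/2 < c by linarith) (show c < 2*c by linarith))
  obtain ⟨e, he, H⟩ := Metric.eventually_nhds_iff.1 h1
  refine ⟨e, he, fun x hx => H ?_⟩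
  rw [Real.dist_eq, sub_zero, abs_of_pos hx.1]; exact hx.2

lemma side (m : ℕ) (f : ℕ → ℝ → ℝ) (s : Finset ℕ) (h2 : 2 ∈ s) (hs : ∀ p ∈ s, 2 ≤ p)
    (hf : ∀ p ∈ s, ContDiff ℝ (⊤ : ℕ∞) (f p)) (L : ℕ → ℝ) 
    (hL : ∀ p ∈ s, ∀ x y, |f p x - f p y| ≤ L p * |x - y|)
    (hf2 : f 2 0 < 0) :
    ∃ a : ℕ → ℝ, a 0 = Real.sqrt (-(f 2 0)) ∧ ∃ κ : ℝ, 0 < κ ∧ ∃ e : ℝ, 0 < e ∧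
      ∀ ε ∈ Set.Ioo (0:ℝ) e, 0 < ∑ k ∈ Finset.range (m+1), a k * ε^k ∧
      ∀ ρ : ℝ, |ρ| ≤ ε^(m+3) → ∀ ξ : ℝ, 0 ≤ ξ →
      (ξ < ε * (∑ k ∈ Finset.range (m+1), a k * ε^k) - κ * ε^(m+2) → 
        ξ^2 + ∑ p ∈ s, ε^p * f p ξ + ρ < 0) ∧
      (ε * (∑ k ∈ Finset.range (m+1), a k * ε^k) + κ * ε^(m+2) < ξ → 
        0 < ξ^2 + ∑ p ∈ s, ε^p * f p ξ + ρ) := by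
  set c := Real.sqrt (-(f 2 0)) with hcdef
  have hc : 0 < c := Real.sqrt_pos.2 (by linarith)
  have hc2 : c^2 = -(f 2 0) := Real.sq_sqrt (by linarith)
  have hT : ∀ p, ∃ T : ℝ[X], p ∈ s → (T.eval 0 = f p 0 ∧ ∃ B : ℝ, 0 ≤ B ∧ ∀ x ∈ Set.Icc (0:ℝ) 1,
      |f p x - T.eval x| ≤ B * x ^ (m+1)) := by
    intro p
    by_cases hp : p ∈ s
    · obtain ⟨T, h⟩ := taylor_poly m (f p) (hf p hp)
      exact ⟨T, fun _ => h⟩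
    · exact ⟨0, fun h => absurd h hp⟩
  choose T hT using hT
  have hB : ∀ p, ∃ B : ℝ, p ∈ s → (0 ≤ B ∧ ∀ x ∈ Set.Icc (0:ℝ) 1,
      |f p x - (T p).eval x| ≤ B * x ^ (m+1)) := by
    intro p
    by_cases hp : p ∈ s
    · obtain ⟨B, h⟩ := (hT p hp).2
      exact ⟨B, fun _ => h⟩
    · exact ⟨0, fun h => absurd h hp⟩
  choose B hB using hB
  obtain ⟨P, hdeg, hP0, R, hR⟩ := hensel s T c hc h2 hs (by rw [(hT 2 h2).1]; linarith) m
  obtain ⟨D, hD0, hD⟩ := poly_bound R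
  obtain ⟨e, he, hPe⟩ := poly_near P c hc hP0
  have hL0 : ∀ p ∈ s, 0 ≤ L p := fun p hp => by
    have := (abs_nonneg _).trans (hL p hp 1 0)
    simpa using this
  set K := ∑ p ∈ s, L p with hK
  have hK0 : 0 ≤ K := Finset.sum_nonneg hL0
  set M := ∑ p ∈ s, B p with hM
  have hM0 : 0 ≤ M := Finset.sum_nonneg fun p hp => (hB p hp).1
  set E := D + M * (2*c)^(m+1) with hE
  have hE0 : 0 ≤ E := by positivity
  have hPsum : ∀ x, P.eval x = ∑ k ∈ Finset.range (m+1), P.coeff k * x^k :=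
    fun x => eval_eq_sum_range' hdeg x
  refine ⟨P.coeff, hP0, 4*(E+2)/c, by positivity, min (min e 1) (min (1/(2*c)) (c/(4*(K+1)))), by positivity, ?_⟩
  intro ε hε
  obtain ⟨hε0, hε1⟩ := hε
  simp only [lt_min_iff] at hε1
  obtain ⟨⟨h1, h3⟩, h4, h5⟩ := hε1
  rw [lt_div_iff₀ (by positivity)] at h4 h5
  rw [← hPsum]
  obtain ⟨hPl, hPu⟩ := hPe ε ⟨hε0, h1⟩
  refine ⟨by linarith, fun ρ hρ ξ hξ => ?_⟩
  set u := ε * P.eval ε with hu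
  have hu0 : ε * (c/2) ≤ u := mul_le_mul_of_nonneg_left hPl.le hε0.le
  have hu1 : u ≤ ε * (2*c) := mul_le_mul_of_nonneg_left hPu.le hε0.le
  have hupos : 0 < u := lt_of_lt_of_le (by positivity) hu0
  have huI : u ∈ Set.Icc (0:ℝ) 1 := ⟨hupos.le, by linarith⟩
  -- value at u
  have hval : |u^2 + ∑ p ∈ s, ε^p * f p u| ≤ E * ε^(m+3) := by
    have hRe := congrArg (eval ε) hR
    simp only [eval_add, eval_pow, eval_finsetSum, eval_mul, eval_X, eval_comp, ← hu] at hRe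
    have e1 : u^2 + ∑ p ∈ s, ε^p * f p u = ε^2 * (ε^(m+1) * R.eval ε) +
        ∑ p ∈ s, ε^p * (f p u - (T p).eval u) := by
      rw [← hRe, mul_add, Finset.mul_sum, add_assoc, ← Finset.sum_add_distrib, hu]
      congr 1
      · ring
      · refine Finset.sum_congr rfl fun p hp => ?_
        obtain ⟨q, rfl⟩ := Nat.exists_eq_add_of_le (hs p hp)
        rw [Nat.add_sub_cancel_left]
        ring
    rw [e1]
    refine (abs_add_le _ _).trans ?_
    have a1 : |ε^2 * (ε^(m+1) * R.eval ε)| ≤ D * ε^(m+3) := by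
      rw [← mul_assoc, abs_mul, abs_of_pos (by positivity)]
      calc _ ≤ ε^2 * ε^(m+1) * D := by gcongr; exact hD ε ⟨hε0.le, h3.le⟩
        _ = _ := by ring
    have a2 : |∑ p ∈ s, ε^p * (f p u - (T p).eval u)| ≤ M * (2*c)^(m+1) * ε^(m+3) := by
      refine (Finset.abs_sum_le_sum_abs _ _).trans ?_
      rw [hM, Finset.sum_mul, Finset.sum_mul]
      refine Finset.sum_le_sum fun p hp => ?_
      rw [abs_mul, abs_of_pos (by positivity)]
      obtain ⟨hb0, hb⟩ := hB p hp
      calc _ ≤ ε^2 * (B p * (ε * (2*c))^(m+1)) := by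
            refine mul_le_mul (pow_le_pow_of_le_one hε0.le h3.le (hs p hp)) ((hb u huI).trans ?_) (abs_nonneg _) (by positivity)
            gcongr
        _ = _ := by rw [mul_pow]; ring
    rw [hE, add_mul]; linarith
  have hdiff : |∑ p ∈ s, ε^p * f p ξ - ∑ p ∈ s, ε^p * f p u| ≤ K * ε^2 * |ξ - u| := by
    rw [← Finset.sum_sub_distrib]
    refine (Finset.abs_sum_le_sum_abs _ _).trans ?_
    rw [hK, Finset.sum_mul, Finset.sum_mul]
    refine Finset.sum_le_sum fun p hp => ?_
    rw [← mul_sub, abs_mul, abs_of_pos (by positivity)]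
    calc _ ≤ ε^2 * (L p * |ξ - u|) := 
          mul_le_mul (pow_le_pow_of_le_one hε0.le h3.le (hs p hp)) (hL p hp _ _) (abs_nonneg _) (by positivity)
      _ = _ := by ring
  have hfac : ε * (c/4) ≤ ξ + u - K * ε^2 := by
    have : ε * (ε * (4*(K+1))) ≤ ε * c := mul_le_mul_of_nonneg_left h5.le hε0.le
    nlinarith [sq_nonneg ε]
  have hkap : 4*(E+2)/c * ε^(m+2) * (ε * (c/4)) = (E+2) * ε^(m+3) := by
    field_simp
    ring
  have hpos : 0 < ε^(m+3) := by positivity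
  rw [abs_le] at hval hdiff hρ
  have hk0 : 0 < 4*(E+2)/c * ε^(m+2) := by positivity
  have hec : 0 < ε * (c/4) := by positivity
  constructor
  · intro h
    rw [abs_of_neg (by linarith)] at hdiff
    have : 4*(E+2)/c * ε^(m+2) * (ε * (c/4)) ≤ (u - ξ) * (ξ + u - K * ε^2) :=
      mul_le_mul (by linarith) hfac hec.le (by linarith)
    nlinarith
  · intro h
    rw [abs_of_pos (by linarith)] at hdiff
    have : 4*(E+2)/c * ε^(m+2) * (ε * (c/4)) ≤ (ξ - u) * (ξ + u - K * ε^2) :=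
      mul_le_mul (by linarith) hfac hec.le (by linarith)
    nlinarith

end

open MeasureTheory

theorem stmt_14 (N : ℕ) (hN : 2 ≤ N)
    (f : ℕ → ℝ → ℝ)
    (hf : ∀ p : ℕ, 2 ≤ p → p ≤ N → ContDiff ℝ (⊤ : ℕ∞) (f p))
    (hfb : ∀ p : ℕ, 2 ≤ p → p ≤ N → ∀ k : ℕ, ∃ B : ℝ,
      ∀ ξ : ℝ, |iteratedDeriv k (f p) ξ| ≤ B)
    (hf2 : f 2 0 < 0) :
    ∃ a : ℕ → ℝ, ∃ C : ℝ, 0 < C ∧ ∃ ε₁ : ℝ, 0 < ε₁ ∧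
      ∀ ε : ℝ, ε ∈ Set.Ioo 0 ε₁ →
      ∀ r : ℝ → ℝ, Measurable r → (∀ ξ : ℝ, |r ξ| ≤ ε ^ (N + 1)) →
        |(volume {ξ : ℝ |
            ξ ^ 2 + ∑ p ∈ Finset.Icc 2 N, ε ^ p * f p ξ + r ξ < 0}).toReal -
          ε * (2 * Real.sqrt (-(f 2 0)) + ∑ p ∈ Finset.Icc 1 (N - 2), a p * ε ^ p)| ≤
          C * ε ^ N := by
  obtain ⟨m, rfl⟩ := Nat.exists_eq_add_of_le' hN
  have hL : ∀ p, ∃ L : ℝ, p ∈ Finset.Icc 2 (m+2) → ∀ x y, |f p x - f p y| ≤ L * |x - y| := by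
    intro p
    by_cases hp : p ∈ Finset.Icc 2 (m+2)
    · have hp' := Finset.mem_Icc.1 hp
      obtain ⟨B, hB⟩ := hfb p hp'.1 hp'.2 1
      refine ⟨B, fun _ x y => ?_⟩
      have hd : Differentiable ℝ (f p) := (hf p hp'.1 hp'.2).differentiable (by simp)
      exact Convex.norm_image_sub_le_of_norm_deriv_le (s := Set.univ) (fun x _ => hd x)
        (fun x _ => by have := hB x; rwa [iteratedDeriv_one] at this) convex_univ
        (Set.mem_univ y) (Set.mem_univ x)
    · exact ⟨0, fun h => absurd h hp⟩
  choose L hL using hL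
  have h2 : 2 ∈ Finset.Icc 2 (m+2) := by simp
  have hs : ∀ p ∈ Finset.Icc 2 (m+2), 2 ≤ p := fun p hp => (Finset.mem_Icc.1 hp).1
  have hf' : ∀ p ∈ Finset.Icc 2 (m+2), ContDiff ℝ (⊤ : ℕ∞) (f p) := fun p hp =>
    hf p (Finset.mem_Icc.1 hp).1 (Finset.mem_Icc.1 hp).2
  obtain ⟨a, ha0, κ, hκ, e, he, H⟩ := side m f _ h2 hs hf' L hL hf2
  obtain ⟨b, hb0, κ', hκ', e', he', H'⟩ := side m (fun p x => f p (-x)) _ h2 hs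
    (fun p hp => (hf' p hp).comp contDiff_neg) L
    (fun p hp x y => by
      have := hL p hp (-x) (-y)
      rwa [show -x - -y = -(x-y) by ring, abs_neg] at this) (by simpa using hf2)
  rw [neg_zero] at hb0
  refine ⟨fun k => a k + b k, κ + κ', by positivity, min e e', by positivity, ?_⟩
  intro ε hε r hr hrb
  obtain ⟨hε0, hε1⟩ := hε
  obtain ⟨hε1, hε2⟩ := lt_min_iff.1 hε1
  obtain ⟨hp, H⟩ := H ε ⟨hε0, hε1⟩
  obtain ⟨hp', H'⟩ := H' ε ⟨hε0, hε2⟩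
  have hsum : 2 * Real.sqrt (-(f 2 0)) + ∑ p ∈ Finset.Icc 1 (m + 2 - 2), (a p + b p) * ε ^ p =
      (∑ k ∈ Finset.range (m+1), a k * ε^k) + ∑ k ∈ Finset.range (m+1), b k * ε^k := by
    have : Finset.Icc 1 (m+2-2) = Finset.Ico 1 (m+1) := by ext; simp
    rw [← Finset.sum_add_distrib, Finset.range_eq_Ico, Finset.sum_eq_sum_Ico_succ_bot (by omega), this]
    simp only [ha0, hb0, pow_zero, add_mul]
    ring
  rw [hsum]
  set A := ∑ k ∈ Finset.range (m+1), a k * ε^k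
  set A' := ∑ k ∈ Finset.range (m+1), b k * ε^k
  set S := {ξ : ℝ | ξ ^ 2 + ∑ p ∈ Finset.Icc 2 (m+2), ε ^ p * f p ξ + r ξ < 0} with hS
  have hsub1 : Set.Ioo (-(ε * A' - κ' * ε^(m+2))) (ε * A - κ * ε^(m+2)) ⊆ S := by
    intro x hx
    rcases le_total 0 x with h | h
    · exact (H (r x) (hrb x) x h).1 hx.2
    · have := (H' (r x) (hrb x) (-x) (by linarith)).1 (by linarith [hx.1])
      simpa [hS] using this
  have hsub2 : S ⊆ Set.Icc (-(ε * A' + κ' * ε^(m+2))) (ε * A + κ * ε^(m+2)) := by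
    intro x hx
    have hx' : x ^ 2 + ∑ p ∈ Finset.Icc 2 (m+2), ε ^ p * f p x + r x < 0 := hx
    have q1 : 0 < ε * A' + κ' * ε^(m+2) := by positivity
    have q2 : 0 < ε * A + κ * ε^(m+2) := by positivity
    rcases le_total 0 x with h | h
    · refine ⟨by linarith, ?_⟩
      by_contra hh
      exact absurd ((H (r x) (hrb x) x h).2 (not_le.1 hh)) (not_lt.2 hx'.le)
    · refine ⟨?_, by linarith⟩
      by_contra hh
      have := (H' (r x) (hrb x) (-x) (by linarith)).2 (by linarith [not_le.1 hh])
      simp only [neg_neg, neg_sq] at this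
      linarith
  have hfin : volume S ≠ ⊤ := ne_top_of_le_ne_top (by simp [Real.volume_Icc]) (measure_mono hsub2)
  have m1 := ENNReal.toReal_mono hfin (measure_mono (μ := volume) hsub1)
  have m2 := ENNReal.toReal_mono (by simp [Real.volume_Icc]) (measure_mono (μ := volume) hsub2)
  rw [Real.volume_Ioo, ENNReal.toReal_ofReal'] at m1
  have m1' := (le_max_left _ _).trans m1
  rw [Real.volume_Icc, ENNReal.toReal_ofReal (by
    have q1 : 0 < ε * A' + κ' * ε^(m+2) := by positivity
    have q2 : 0 < ε * A + κ * ε^(m+2) := by positivity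
    linarith)] at m2
  rw [abs_le]
  constructor <;> nlinarith
end
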